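/- Let P(f) := Σ_{j=1}^∞ ⟨f,χ_j⟩²⟨f,r_j⟩ be the continuous 3-homogeneous polynomial on L¹[0,1] built from the dyadic indicators χ_j and the Rademacher functions r_j. Let f₀ ∈ L¹[0,1], r ≥ ‖f₀‖₁, ε > 0, and choose δ > 0 with 5r²δ < ε and j₀ ∈ ℕ such that |⟨f₀, χ_j⟩| < δ for every j > j₀. Then for every f ∈ L¹[0,1] with ‖f‖₁ ≤ r satisfying |⟨f − f₀, χ_j⟩| ≤ δ for all j ∈ ℕ and |⟨f − f₀, r_j⟩| ≤ δ for all 1 ≤ j ≤ j₀, one has |P(f) − P(f₀)| ≤ 5r²δ < ε. -/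

import Mathlib

/-!
Write `a j = ⟨f, χ_j⟩`, `b j = ⟨f, r_j⟩` and `A j`, `B j` for the same pairings with `f₀`. Since the
`χ_j` are indicators of disjoint sets, `Σ |a j| ≤ ‖f‖ ≤ r` (`sum_abs_dyad_le`), and since `|r_j| ≤ 1`,
`|b j| ≤ r` (`abs_radem_pairing_le`); likewise for `f₀`. In
`a² b - A² B = (a - A) (a + A) b + A² (b - B)`
the first term is at most `δ r (|a| + |A|)`. The second is at most `2 r δ |A|`: for `j ≤ j₀` because
`|A| ≤ r` and `|b - B| ≤ δ`, for `j > j₀` because `|A| ≤ δ` and `|b - B| ≤ 2 r`. Summing over `j`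
gives `|P f - P f₀| ≤ 4 r² δ`.
-/

open MeasureTheory

/-- Lebesgue measure restricted to `[0,1]`. -/
noncomputable def mu01 : Measure ℝ := volume.restrict (Set.Icc 0 1)

/-- The `n`-th Rademacher function `r_n (t) = sign (sin (2^n π t))`. -/
noncomputable def radem (n : ℕ) : ℝ → ℝ := fun t => Real.sign (Real.sin (2 ^ n * Real.pi * t))

/-- The characteristic function `χ_j` of the dyadic interval `I_j = (2^{-j}, 2^{-j+1})`. -/
noncomputable def dyadInd (j : ℕ) : ℝ → ℝ :=
  Set.indicator (Set.Ioo (((2 : ℝ) ^ j)⁻¹) (2 * ((2 : ℝ) ^ j)⁻¹)) fun _ => 1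

/-- The polynomial `P (f) = Σ_{j=1}^∞ ⟨f,χ_j⟩² ⟨f,r_j⟩` on `L¹[0,1]`. -/
noncomputable def polyP (f : Lp ℝ 1 mu01) : ℝ :=
  ∑' j : ℕ, (∫ t, f t * dyadInd (j + 1) t ∂mu01) ^ 2 * (∫ t, f t * radem (j + 1) t ∂mu01)

lemma dyadInd_pairing (f : ℝ → ℝ) (j : ℕ) :
    ∫ t, f t * dyadInd j t ∂mu01 =
      ∫ t in Set.Ioo (((2 : ℝ) ^ j)⁻¹) (2 * ((2 : ℝ) ^ j)⁻¹), f t ∂mu01 := by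
  rw [← integral_indicator measurableSet_Ioo]
  congr 1
  ext t
  by_cases ht : t ∈ Set.Ioo (((2 : ℝ) ^ j)⁻¹) (2 * ((2 : ℝ) ^ j)⁻¹) <;> simp [dyadInd, ht]

lemma dyad_disjoint : Pairwise (Function.onFun Disjoint
    fun j : ℕ => Set.Ioo (((2 : ℝ) ^ j)⁻¹) (2 * ((2 : ℝ) ^ j)⁻¹)) := by
  -- for `i < j` the right endpoint of the `j`-th interval is at most the left one of the `i`-th
  have key : ∀ i j : ℕ, i < j → 2 * ((2 : ℝ) ^ j)⁻¹ ≤ ((2 : ℝ) ^ i)⁻¹ := by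
    intro i j h
    have h1 : (2 : ℝ) ^ (i + 1) ≤ 2 ^ j := pow_le_pow_right₀ (by norm_num) h
    have h2 : ((2 : ℝ) ^ j)⁻¹ ≤ ((2 : ℝ) ^ (i + 1))⁻¹ := inv_anti₀ (by positivity) h1
    rw [pow_succ, mul_inv] at h2
    linarith
  intro i j hij
  refine Set.disjoint_left.2 fun t hi hj => ?_
  rcases lt_or_gt_of_ne hij with h | h
  · linarith [key i j h, hi.1, hj.2]
  · linarith [key j i h, hj.1, hi.2]

lemma integral_abs_eq_norm (f : Lp ℝ 1 mu01) : ∫ t, |f t| ∂mu01 = ‖f‖ := by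
  rw [L1.norm_eq_integral_norm]
  rfl

lemma sum_abs_dyad_le (f : Lp ℝ 1 mu01) (s : Finset ℕ) :
    ∑ j ∈ s, |∫ t, f t * dyadInd (j + 1) t ∂mu01| ≤ ‖f‖ := by
  have hf : Integrable (fun t => |f t|) mu01 := (L1.integrable_coeFn f).abs
  calc ∑ j ∈ s, |∫ t, f t * dyadInd (j + 1) t ∂mu01|
      ≤ ∑ j ∈ s, ∫ t in Set.Ioo (((2 : ℝ) ^ (j + 1))⁻¹) (2 * ((2 : ℝ) ^ (j + 1))⁻¹),
          |f t| ∂mu01 := by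
        refine Finset.sum_le_sum fun j _ => ?_
        rw [dyadInd_pairing]
        exact abs_integral_le_integral_abs
    _ = ∫ t in ⋃ j ∈ s, Set.Ioo (((2 : ℝ) ^ (j + 1))⁻¹) (2 * ((2 : ℝ) ^ (j + 1))⁻¹),
          |f t| ∂mu01 := by
        refine (integral_biUnion_finset s (fun _ _ => measurableSet_Ioo) ?_
          fun _ _ => hf.integrableOn).symm
        intro i _ j _ hij
        exact dyad_disjoint (by omega : i + 1 ≠ j + 1)
    _ ≤ ∫ t, |f t| ∂mu01 :=
        setIntegral_le_integral hf (Filter.Eventually.of_forall fun t => abs_nonneg _)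
    _ = ‖f‖ := integral_abs_eq_norm f

lemma summable_dyad (f : Lp ℝ 1 mu01) :
    Summable fun j : ℕ => |∫ t, f t * dyadInd (j + 1) t ∂mu01| :=
  summable_of_sum_le (fun _ => abs_nonneg _) (sum_abs_dyad_le f)

lemma abs_radem_le (j : ℕ) (t : ℝ) : |radem j t| ≤ 1 := by
  unfold radem
  rcases Real.sign_apply_eq (Real.sin (2 ^ j * Real.pi * t)) with h | h | h <;> simp [h]

lemma measurable_radem (j : ℕ) : Measurable (radem j) := by
  have hs : Measurable Real.sign :=
    Measurable.ite measurableSet_Iio measurable_const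
      (Measurable.ite measurableSet_Ioi measurable_const measurable_const)
  exact hs.comp (by fun_prop)

lemma integrable_mul_radem (f : Lp ℝ 1 mu01) (j : ℕ) :
    Integrable (fun t => f t * radem j t) mu01 :=
  (L1.integrable_coeFn f).mul_bdd (c := 1) (measurable_radem j).aestronglyMeasurable
    (Filter.Eventually.of_forall fun t => abs_radem_le j t)

lemma integrable_mul_dyadInd (f : Lp ℝ 1 mu01) (j : ℕ) :
    Integrable (fun t => f t * dyadInd j t) mu01 := by
  refine (L1.integrable_coeFn f).mul_bdd (c := 1)
    (measurable_const.indicator measurableSet_Ioo).aestronglyMeasurable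
    (Filter.Eventually.of_forall fun t => ?_)
  exact (norm_indicator_le_norm_self _ _).trans (by simp)

lemma abs_radem_pairing_le (f : Lp ℝ 1 mu01) (j : ℕ) :
    |∫ t, f t * radem j t ∂mu01| ≤ ‖f‖ := by
  rw [← integral_abs_eq_norm]
  refine abs_integral_le_integral_abs.trans
    (integral_mono (integrable_mul_radem f j).abs (L1.integrable_coeFn f).abs fun t => ?_)
  simp only [abs_mul]
  exact mul_le_of_le_one_right (abs_nonneg _) (abs_radem_le j t)

/-- The defining series of `polyP` converges, so its `tsum` is a genuine sum. -/
lemma summable_polyP (f : Lp ℝ 1 mu01) : Summable fun j : ℕ =>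
    (∫ t, f t * dyadInd (j + 1) t ∂mu01) ^ 2 * (∫ t, f t * radem (j + 1) t ∂mu01) := by
  refine Summable.of_norm_bounded ((summable_dyad f).mul_left (‖f‖ * ‖f‖)) fun j => ?_
  have h1 : |∫ t, f t * dyadInd (j + 1) t ∂mu01| ≤ ‖f‖ := by
    simpa using sum_abs_dyad_le f {j}
  have h2 := abs_radem_pairing_le f (j + 1)
  rw [Real.norm_eq_abs, abs_mul, abs_pow, sq]
  calc _ ≤ ‖f‖ * |∫ t, f t * dyadInd (j + 1) t ∂mu01| * ‖f‖ := by gcongr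
    _ = _ := by ring

/-- The bound on a single term of the series. -/
lemma term_bound {a b A B r δ : ℝ} (hδ : 0 ≤ δ) (hb : |b| ≤ r) (hB : |B| ≤ r) (hA : |A| ≤ r)
    (ha : |a - A| ≤ δ) (h : |b - B| ≤ δ ∨ |A| ≤ δ) :
    |a ^ 2 * b - A ^ 2 * B| ≤ δ * r * (|a| + 3 * |A|) := by
  have hr : 0 ≤ r := (abs_nonneg _).trans hb
  have h1 : |(a - A) * (a + A) * b| ≤ δ * (|a| + |A|) * r := by
    rw [abs_mul, abs_mul]
    gcongr
    exact abs_add_le a A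
  have h2 : |A ^ 2 * (b - B)| ≤ 2 * r * δ * |A| := by
    rw [abs_mul, abs_pow, sq]
    rcases h with h | h
    · calc |A| * |A| * |b - B| ≤ r * |A| * δ := by gcongr
        _ ≤ 2 * r * δ * |A| := by nlinarith [mul_nonneg (mul_nonneg hr hδ) (abs_nonneg A)]
    · have hbB : |b - B| ≤ 2 * r := (abs_sub b B).trans (by linarith)
      calc |A| * |A| * |b - B| ≤ δ * |A| * (2 * r) := by gcongr
        _ = 2 * r * δ * |A| := by ring
  calc |a ^ 2 * b - A ^ 2 * B| = |(a - A) * (a + A) * b + A ^ 2 * (b - B)| := by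
        congr 1; ring
    _ ≤ _ := abs_add_le _ _
    _ ≤ δ * (|a| + |A|) * r + 2 * r * δ * |A| := add_le_add h1 h2
    _ = δ * r * (|a| + 3 * |A|) := by ring

/-- Estimate showing `P` is `ckw`-continuous on bounded sets: with `f₀ ∈ L¹[0,1]`,
`r ≥ ‖f₀‖₁`, `5r²δ < ε` and `|⟨f₀, χ_j⟩| < δ` for `j > j₀`, every `f` with `‖f‖₁ ≤ r`,
`|⟨f − f₀, χ_j⟩| ≤ δ` for all `j ≥ 1` and `|⟨f − f₀, r_j⟩| ≤ δ` for `1 ≤ j ≤ j₀` satisfies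
`|P (f) − P (f₀)| ≤ 5r²δ < ε`. -/
theorem polyP_estimate (f₀ : Lp ℝ 1 mu01) (r ε δ : ℝ) (j₀ : ℕ)
    (hr : ‖f₀‖ ≤ r) (hε : 0 < ε) (hδ : 0 < δ) (hδε : 5 * r ^ 2 * δ < ε)
    (hj₀ : ∀ j : ℕ, j₀ < j → |∫ t, f₀ t * dyadInd j t ∂mu01| < δ)
    (f : Lp ℝ 1 mu01) (hf : ‖f‖ ≤ r)
    (hχ : ∀ j : ℕ, 1 ≤ j → |∫ t, (f t - f₀ t) * dyadInd j t ∂mu01| ≤ δ)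
    (hrad : ∀ j : ℕ, 1 ≤ j → j ≤ j₀ → |∫ t, (f t - f₀ t) * radem j t ∂mu01| ≤ δ) :
    |polyP f - polyP f₀| ≤ 5 * r ^ 2 * δ ∧ |polyP f - polyP f₀| < ε := by
  have hr0 : 0 ≤ r := (norm_nonneg _).trans hr
  suffices h : |polyP f - polyP f₀| ≤ 5 * r ^ 2 * δ from ⟨h, h.trans_lt hδε⟩
  have hterm : ∀ j : ℕ,
      ‖(∫ t, f t * dyadInd (j + 1) t ∂mu01) ^ 2 * (∫ t, f t * radem (j + 1) t ∂mu01) -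
        (∫ t, f₀ t * dyadInd (j + 1) t ∂mu01) ^ 2 * (∫ t, f₀ t * radem (j + 1) t ∂mu01)‖ ≤
      δ * r * (|∫ t, f t * dyadInd (j + 1) t ∂mu01| +
        3 * |∫ t, f₀ t * dyadInd (j + 1) t ∂mu01|) := by
    intro j
    refine term_bound hδ.le ((abs_radem_pairing_le f _).trans hf)
      ((abs_radem_pairing_le f₀ _).trans hr) ?_ ?_ ?_
    · exact le_trans (by simpa using sum_abs_dyad_le f₀ {j}) hr
    · rw [← integral_sub (integrable_mul_dyadInd f _) (integrable_mul_dyadInd f₀ _)]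
      simpa only [sub_mul] using hχ (j + 1) (by omega)
    · rcases le_or_gt (j + 1) j₀ with h | h
      · left
        rw [← integral_sub (integrable_mul_radem f _) (integrable_mul_radem f₀ _)]
        simpa only [sub_mul] using hrad (j + 1) (by omega) h
      · exact Or.inr (hj₀ (j + 1) h).le
  have hsum := (((summable_dyad f).hasSum.add ((summable_dyad f₀).hasSum.mul_left 3)).mul_left
    (δ * r))
  have h1 : ∑' j : ℕ, |∫ t, f t * dyadInd (j + 1) t ∂mu01| ≤ r :=
    ((summable_dyad f).tsum_le_of_sum_le (sum_abs_dyad_le f)).trans hf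
  have h2 : ∑' j : ℕ, |∫ t, f₀ t * dyadInd (j + 1) t ∂mu01| ≤ r :=
    ((summable_dyad f₀).tsum_le_of_sum_le (sum_abs_dyad_le f₀)).trans hr
  unfold polyP
  rw [← (summable_polyP f).tsum_sub (summable_polyP f₀), ← Real.norm_eq_abs]
  refine (tsum_of_norm_bounded hsum hterm).trans ?_
  calc _ ≤ δ * r * (r + 3 * r) := by gcongr
    _ ≤ 5 * r ^ 2 * δ := by nlinarith [mul_nonneg hδ.le (sq_nonneg r)]
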